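/- Let M ∈ F_q[T] be monic irreducible of degree d, F = F_q(T), and K = F(Λ_M) the splitting field of the Carlitz polynomial C_M(Z). Then K/F is Galois of degree q^d − 1 with Galois group isomorphic to the cyclic group (F_q[T]/(M))^*, where the automorphism σ_N corresponding to N mod M is determined by σ_N(λ) = C_N(λ) for any fixed nonzero root λ of C_M. -/

import Mathlib

open Polynomial

/-!
Write `C_N(x)` for the value of the Carlitz polynomial `C_N` at a point `x` of a domain `R` over
`A = Fq[T]`, and let `M` be irreducible. For a nonzero root `x` of `C_M` the annihilator
`{N | C_N(x) = 0}` is the ideal `(M)`, so `u ↦ C_u(x)` embeds `A/(M)` into the roots of `C_M` in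
`R`. As `A/(M)` has `q ^ deg M = deg C_M` elements, this is a bijection and the roots are simple.

When `M = 0` in `R` this is absurd, since `C_M' = M` makes `0` a multiple root. So over an algebraic
closure of `A/(M)` the only root of `C_M` is `0`; hence `M` divides all coefficients of `C_M` but
the leading one, and `C_M(Z)/Z`, with constant term `M`, is Eisenstein at `M`.

When `R = K` is the splitting field over `F = Frac A`, the bijection shows that `x` generates `K`,
which has degree `q ^ deg M - 1` by irreducibility of `C_M(Z)/Z`, and that each `σ` in the Galois
group acts on `x` as `C_N` for a unique `N` mod `M`. This is an injective homomorphism from the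
Galois group to `(A/(M))ˣ`, and the two groups have the same order.
-/

theorem isPrimitive_of_isUnit_leadingCoeff {R : Type*} [CommSemiring R] {f : R[X]}
    (hf : IsUnit f.leadingCoeff) : f.IsPrimitive := fun _ hr =>
  isUnit_of_dvd_unit ((C_dvd_iff_dvd_coeff _ f).mp hr f.natDegree) hf

theorem coeff_eq_zero_of_splits_of_roots_eq_zero {R : Type*} [CommRing R] [IsDomain R] {f : R[X]}
    (hf : f.Splits) (h : ∀ x ∈ f.roots, x = 0) {n : ℕ} (hn : n < f.natDegree) :
    f.coeff n = 0 := by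
  have hroots : f.roots = Multiset.replicate f.natDegree 0 :=
    splits_iff_card_roots.mp hf ▸ Multiset.eq_replicate_card.mpr h
  rw [hf.eq_prod_roots, hroots, Multiset.map_replicate, Multiset.prod_replicate, C_0, sub_zero,
    coeff_C_mul_X_pow, if_neg hn.ne]

theorem algEquiv_aeval {A F R : Type*} [CommSemiring A] [CommSemiring F] [Semiring R] [Algebra A F]
    [Algebra F R] [Algebra A R] [IsScalarTower A F R] (σ : R ≃ₐ[F] R) (f : A[X]) (x : R) :
    σ (aeval x f) = aeval (σ x) f :=
  (aeval_algHom_apply (σ.restrictScalars A) x f).symm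

section Quotient

variable {k : Type*} [Field k] {M : k[X]}

theorem finite_quotient_span_singleton [Finite k] (hM : M ≠ 0) :
    Finite (k[X] ⧸ Ideal.span {M}) :=
  have : Module.Finite k (k[X] ⧸ Ideal.span {M}) := (AdjoinRoot.powerBasis hM).finite
  Module.finite_of_finite k

theorem natCard_quotient_span_singleton (hM : M ≠ 0) :
    Nat.card (k[X] ⧸ Ideal.span {M}) = Nat.card k ^ M.natDegree := by
  have : Module.Finite k (k[X] ⧸ Ideal.span {M}) := (AdjoinRoot.powerBasis hM).finite
  rw [Module.natCard_eq_pow_finrank (K := k), finrank_quotient_span_eq_natDegree]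

theorem natCard_units_quotient_span_singleton (hM : Irreducible M) :
    Nat.card (k[X] ⧸ Ideal.span {M})ˣ = Nat.card k ^ M.natDegree - 1 := by
  have := PrincipalIdealRing.isMaximal_of_irreducible hM
  let := Ideal.Quotient.field (Ideal.span {M})
  rw [← natCard_quotient_span_singleton hM.ne_zero]
  exact Nat.card_units _

end Quotient

/-- `Carl` is the Carlitz module `N ↦ C_N(Z)` of `Fq[T]`. The outer variable of `Fq[X][X]` is `Z`,
the inner one is `T`; the fields determine `Carl` uniquely. -/
structure IsCarlitzModule (Fq : Type*) [Field Fq] [Fintype Fq] (Carl : Fq[X] → Fq[X][X]) :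
    Prop where
  apply_one : Carl 1 = X
  apply_X : Carl X = X ^ Fintype.card Fq + C X * X
  apply_add : ∀ M N, Carl (M + N) = Carl M + Carl N
  apply_C_mul : ∀ a N, Carl (C a * N) = C (C a) * Carl N
  apply_mul : ∀ M N, Carl (M * N) = (Carl M).comp (Carl N)

namespace IsCarlitzModule

variable {Fq : Type*} [Field Fq] [Fintype Fq] {Carl : Fq[X] → Fq[X][X]} {M : Fq[X]}

local notation "q" => Fintype.card Fq

theorem apply_zero (hC : IsCarlitzModule Fq Carl) : Carl 0 = 0 := by
  simpa using hC.apply_add 0 0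

theorem apply_C (hC : IsCarlitzModule Fq Carl) (a : Fq) : Carl (C a) = C (C a) * X := by
  rw [← mul_one (C a), hC.apply_C_mul, hC.apply_one, mul_one]

theorem apply_mul_X (hC : IsCarlitzModule Fq Carl) (N : Fq[X]) :
    Carl (N * X) = Carl N ^ q + C X * Carl N := by
  rw [mul_comm, hC.apply_mul, hC.apply_X]
  simp

theorem apply_eq_divX (hC : IsCarlitzModule Fq Carl) (N : Fq[X]) :
    Carl N = Carl N.divX ^ q + (C X * Carl N.divX + C (C (N.coeff 0)) * X) := by
  conv_lhs => rw [← divX_mul_X_add N, hC.apply_add, hC.apply_mul_X, hC.apply_C]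
  rw [add_assoc]

theorem coeff_zero_apply (hC : IsCarlitzModule Fq Carl) (N : Fq[X]) : (Carl N).coeff 0 = 0 := by
  have h : Carl 0 = (Carl N).comp (Carl 0) := by rw [← hC.apply_mul, mul_zero]
  simpa [hC.apply_zero, ← coeff_zero_eq_eval_zero] using h.symm

theorem derivative_apply (hC : IsCarlitzModule Fq Carl) (N : Fq[X]) :
    derivative (Carl N) = C N := by
  have hq : (q : Fq[X]) = 0 := by
    rw [← map_natCast (algebraMap Fq Fq[X]), FiniteField.cast_card_eq_zero, map_zero]
  induction N using Polynomial.induction_on with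
  | C a => simp [hC.apply_C]
  | add M N hM hN => simp [hC.apply_add, hM, hN]
  | monomial n a ih =>
    rw [pow_succ, ← mul_assoc, hC.apply_mul_X, derivative_add, derivative_pow, hq,
      derivative_C_mul, ih, ← C_mul, C_0, zero_mul, zero_mul, zero_add, mul_comm]

theorem coeff_one_apply (hC : IsCarlitzModule Fq Carl) (N : Fq[X]) : (Carl N).coeff 1 = N := by
  simpa [coeff_derivative] using congrArg (coeff · 0) (hC.derivative_apply N)

theorem natDegree_apply_le (hC : IsCarlitzModule Fq Carl) {N : Fq[X]} {n : ℕ}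
    (hN : N.natDegree ≤ n) : (Carl N).natDegree ≤ q ^ n := by
  induction n generalizing N with
  | zero =>
    obtain ⟨a, rfl⟩ := natDegree_eq_zero.mp (Nat.le_zero.mp hN)
    rw [hC.apply_C, pow_zero]
    exact (natDegree_C_mul_le _ _).trans natDegree_X_le
  | succ n ih =>
    have hdiv : (Carl N.divX).natDegree ≤ q ^ n := ih (by
      rw [natDegree_divX_eq_natDegree_tsub_one]; lia)
    have hpos : 1 ≤ q := Fintype.card_pos
    rw [hC.apply_eq_divX, pow_succ']
    refine natDegree_add_le_of_degree_le (natDegree_pow_le_of_le q hdiv)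
      (natDegree_add_le_of_degree_le ?_ ?_)
    · exact (natDegree_C_mul_le _ _).trans (hdiv.trans (Nat.le_mul_of_pos_left _ hpos))
    · exact (natDegree_C_mul_le _ _).trans <| natDegree_X_le.trans <| by
        rw [← pow_succ']; exact Nat.one_le_pow _ _ hpos

theorem coeff_card_pow_apply (hC : IsCarlitzModule Fq Carl) {N : Fq[X]} {n : ℕ}
    (hN : N.natDegree ≤ n) : (Carl N).coeff (q ^ n) = C (N.coeff n) := by
  induction n generalizing N with
  | zero =>
    obtain ⟨a, rfl⟩ := natDegree_eq_zero.mp (Nat.le_zero.mp hN)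
    simp [hC.apply_C]
  | succ n ih =>
    have hdiv : N.divX.natDegree ≤ n := by rw [natDegree_divX_eq_natDegree_tsub_one]; lia
    have hlt : q ^ n < q ^ (n + 1) := Nat.pow_lt_pow_right Fintype.one_lt_card n.lt_succ_self
    have hcoeff : (Carl N.divX).coeff (q ^ (n + 1)) = 0 :=
      coeff_eq_zero_of_natDegree_lt ((hC.natDegree_apply_le hdiv).trans_lt hlt)
    have hne : q ^ (n + 1) ≠ 1 := (Nat.one_lt_pow n.succ_ne_zero Fintype.one_lt_card).ne'
    rw [hC.apply_eq_divX, coeff_add, coeff_add, coeff_C_mul, coeff_C_mul, hcoeff,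
      coeff_X_of_ne_one hne, pow_succ', coeff_pow_of_natDegree_le (hC.natDegree_apply_le hdiv),
      ih hdiv, ← C_pow, FiniteField.pow_card, coeff_divX, mul_zero, mul_zero, add_zero, add_zero]

theorem natDegree_apply (hC : IsCarlitzModule Fq Carl) {N : Fq[X]} (hN : N ≠ 0) :
    (Carl N).natDegree = q ^ N.natDegree := by
  refine natDegree_eq_of_le_of_coeff_ne_zero (hC.natDegree_apply_le le_rfl) ?_
  rw [hC.coeff_card_pow_apply le_rfl]
  exact C_ne_zero.mpr (leadingCoeff_ne_zero.mpr hN)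

theorem isUnit_leadingCoeff_apply (hC : IsCarlitzModule Fq Carl) {N : Fq[X]} (hN : N ≠ 0) :
    IsUnit (Carl N).leadingCoeff := by
  rw [leadingCoeff, hC.natDegree_apply hN, hC.coeff_card_pow_apply le_rfl]
  exact isUnit_C.mpr (leadingCoeff_ne_zero.mpr hN).isUnit

theorem one_lt_natDegree_apply (hC : IsCarlitzModule Fq Carl) (hM : Irreducible M) :
    1 < (Carl M).natDegree := by
  rw [hC.natDegree_apply hM.ne_zero]
  exact Nat.one_lt_pow hM.natDegree_pos.ne' Fintype.one_lt_card

section Torsion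

variable {R : Type*} [CommRing R] [Algebra Fq[X] R] {x y : R}

theorem aeval_apply_mul (hC : IsCarlitzModule Fq Carl) (N N' : Fq[X]) (x : R) :
    aeval x (Carl (N * N')) = aeval (aeval x (Carl N')) (Carl N) := by
  rw [hC.apply_mul, aeval_comp]

theorem aeval_zero_apply (hC : IsCarlitzModule Fq Carl) (N : Fq[X]) :
    aeval (0 : R) (Carl N) = 0 := by
  rw [← coeff_zero_eq_aeval_zero', hC.coeff_zero_apply, map_zero]

theorem aeval_apply_of_dvd (hC : IsCarlitzModule Fq Carl) (hx : aeval x (Carl M) = 0) {N : Fq[X]}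
    (hN : M ∣ N) : aeval x (Carl N) = 0 := by
  obtain ⟨N', rfl⟩ := hN
  rw [mul_comm, hC.aeval_apply_mul, hx, hC.aeval_zero_apply]

theorem aeval_apply_eq_zero_iff_dvd (hC : IsCarlitzModule Fq Carl) (hM : Irreducible M)
    (hx : aeval x (Carl M) = 0) (hx0 : x ≠ 0) {N : Fq[X]} :
    aeval x (Carl N) = 0 ↔ M ∣ N := by
  refine ⟨fun hN => ?_, hC.aeval_apply_of_dvd hx⟩
  by_contra hdvd
  obtain ⟨u, v, huv⟩ : IsCoprime M N := hM.coprime_iff_not_dvd.mpr hdvd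
  refine hx0 ?_
  calc x = aeval x (Carl (u * M + v * N)) := by rw [huv, hC.apply_one, aeval_X]
    _ = 0 := by
      rw [hC.apply_add, map_add, hC.aeval_apply_of_dvd hx (dvd_mul_left M u),
        hC.aeval_apply_of_dvd hN (dvd_mul_left N v), add_zero]

theorem aeval_apply_eq_iff (hC : IsCarlitzModule Fq Carl) (hM : Irreducible M)
    (hx : aeval x (Carl M) = 0) (hx0 : x ≠ 0) {N N' : Fq[X]} :
    aeval x (Carl N) = aeval x (Carl N') ↔
      Ideal.Quotient.mk (Ideal.span {M}) N = Ideal.Quotient.mk (Ideal.span {M}) N' := by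
  have hsub : aeval x (Carl N) = aeval x (Carl (N - N')) + aeval x (Carl N') := by
    rw [← map_add, ← hC.apply_add, sub_add_cancel]
  rw [Ideal.Quotient.eq, Ideal.mem_span_singleton, ← hC.aeval_apply_eq_zero_iff_dvd hM hx hx0,
    hsub, add_eq_right]

variable [IsDomain R]

theorem map_apply_ne_zero (hC : IsCarlitzModule Fq Carl) (hM : M ≠ 0) :
    (Carl M).map (algebraMap Fq[X] R) ≠ 0 := by
  have hunit := hC.isUnit_leadingCoeff_apply hM
  rw [← leadingCoeff_ne_zero, leadingCoeff_map_eq_of_isUnit_leadingCoeff _ hunit]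
  exact (hunit.map (algebraMap Fq[X] R)).ne_zero

theorem mem_rootSet_apply (hC : IsCarlitzModule Fq Carl) (hM : M ≠ 0) :
    x ∈ (Carl M).rootSet R ↔ aeval x (Carl M) = 0 :=
  mem_rootSet'.trans (and_iff_right (hC.map_apply_ne_zero hM))

theorem bijOn_aeval_apply_out (hC : IsCarlitzModule Fq Carl) (hM : Irreducible M)
    (hx : aeval x (Carl M) = 0) (hx0 : x ≠ 0) :
    Set.BijOn (fun u : Fq[X] ⧸ Ideal.span {M} => aeval x (Carl u.out)) Set.univ
      ((Carl M).rootSet R) := by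
  have hmaps : Set.MapsTo (fun u : Fq[X] ⧸ Ideal.span {M} => aeval x (Carl u.out)) Set.univ
      ((Carl M).rootSet R) := fun u _ => by
    rw [hC.mem_rootSet_apply hM.ne_zero, ← hC.aeval_apply_mul]
    exact hC.aeval_apply_of_dvd hx (dvd_mul_right M u.out)
  have hinj : Set.InjOn (fun u : Fq[X] ⧸ Ideal.span {M} => aeval x (Carl u.out)) Set.univ :=
    fun u _ v _ huv => by simpa using (hC.aeval_apply_eq_iff hM hx hx0).mp huv
  refine ⟨hmaps, hinj, ?_⟩
  have hcard : ((Carl M).rootSet R).ncard ≤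
      ((fun u : Fq[X] ⧸ Ideal.span {M} => aeval x (Carl u.out)) '' Set.univ).ncard := by
    rw [hinj.ncard_image, Set.ncard_univ, natCard_quotient_span_singleton hM.ne_zero,
      Nat.card_eq_fintype_card, ← hC.natDegree_apply hM.ne_zero]
    exact ncard_rootSet_le _ _
  exact (Set.eq_of_subset_of_ncard_le hmaps.image_subset hcard (rootSet_finite _ _)).ge

theorem nodup_aroots_apply (hC : IsCarlitzModule Fq Carl) (hM : Irreducible M)
    (hx : aeval x (Carl M) = 0) (hx0 : x ≠ 0) : ((Carl M).aroots R).Nodup := by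
  classical
  have hcard : ((Carl M).rootSet R).ncard = (Carl M).natDegree := by
    rw [← (hC.bijOn_aeval_apply_out hM hx hx0).ncard_eq, Set.ncard_univ,
      natCard_quotient_span_singleton hM.ne_zero, Nat.card_eq_fintype_card,
      hC.natDegree_apply hM.ne_zero]
  rw [rootSet_def, Set.ncard_coe_finset] at hcard
  rw [← Multiset.toFinset_card_eq_card_iff_nodup]
  refine (Multiset.toFinset_card_le _).antisymm ?_
  rw [hcard]
  exact (card_roots' _).trans natDegree_map_le

theorem exists_aeval_apply_eq (hC : IsCarlitzModule Fq Carl) (hM : Irreducible M)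
    (hx : aeval x (Carl M) = 0) (hx0 : x ≠ 0) (hy : aeval y (Carl M) = 0) :
    ∃ N, aeval x (Carl N) = y := by
  obtain ⟨u, -, hu⟩ :=
    (hC.bijOn_aeval_apply_out hM hx hx0).surjOn ((hC.mem_rootSet_apply hM.ne_zero).mpr hy)
  exact ⟨u.out, hu⟩

theorem eq_zero_of_aeval_apply_eq_zero (hC : IsCarlitzModule Fq Carl) (hM : Irreducible M)
    (hMR : algebraMap Fq[X] R M = 0) (hx : aeval x (Carl M) = 0) : x = 0 := by
  classical
  by_contra hx0
  have hmult : 1 < ((Carl M).map (algebraMap Fq[X] R)).rootMultiplicity 0 := by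
    rw [one_lt_rootMultiplicity_iff_isRoot (hC.map_apply_ne_zero hM.ne_zero), derivative_map,
      hC.derivative_apply, map_C, hMR, C_0, IsRoot, eval_map_algebraMap, hC.aeval_zero_apply]
    exact ⟨rfl, eval_zero⟩
  rw [← count_roots] at hmult
  exact hmult.not_ge (Multiset.nodup_iff_count_le_one.mp (hC.nodup_aroots_apply hM hx hx0) 0)

theorem algebraMap_coeff_apply_eq_zero (hC : IsCarlitzModule Fq Carl) (hM : M ≠ 0)
    (hsplit : ((Carl M).map (algebraMap Fq[X] R)).Splits)
    (h : ∀ x : R, aeval x (Carl M) = 0 → x = 0) {n : ℕ} (hn : n < (Carl M).natDegree) :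
    algebraMap Fq[X] R ((Carl M).coeff n) = 0 := by
  rw [← coeff_map]
  refine coeff_eq_zero_of_splits_of_roots_eq_zero hsplit (fun x hx => h x ?_) ?_
  · exact (mem_aroots'.mp hx).2
  · rwa [natDegree_map_eq_of_isUnit_leadingCoeff _ (hC.isUnit_leadingCoeff_apply hM)]

theorem exists_ne_zero_aeval_apply_eq_zero (hC : IsCarlitzModule Fq Carl) (hM : Irreducible M)
    (hMR : algebraMap Fq[X] R M ≠ 0) (hsplit : ((Carl M).map (algebraMap Fq[X] R)).Splits) :
    ∃ x : R, aeval x (Carl M) = 0 ∧ x ≠ 0 := by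
  by_contra! h
  refine hMR ?_
  rw [← hC.coeff_one_apply M]
  exact hC.algebraMap_coeff_apply_eq_zero hM.ne_zero hsplit h (hC.one_lt_natDegree_apply hM)

end Torsion

theorem dvd_coeff_apply (hC : IsCarlitzModule Fq Carl) (hM : Irreducible M) {n : ℕ}
    (hn : n < (Carl M).natDegree) : M ∣ (Carl M).coeff n := by
  have := PrincipalIdealRing.isMaximal_of_irreducible hM
  let := Ideal.Quotient.field (Ideal.span {M})
  let L := AlgebraicClosure (Fq[X] ⧸ Ideal.span {M})
  have hker (N : Fq[X]) : algebraMap Fq[X] L N = 0 ↔ M ∣ N := by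
    rw [IsScalarTower.algebraMap_apply Fq[X] (Fq[X] ⧸ Ideal.span {M}) L, map_eq_zero,
      Ideal.Quotient.algebraMap_eq, Ideal.Quotient.eq_zero_iff_dvd]
  rw [← hker]
  exact hC.algebraMap_coeff_apply_eq_zero hM.ne_zero (IsAlgClosed.splits _)
    (fun x => hC.eq_zero_of_aeval_apply_eq_zero hM ((hker M).mpr dvd_rfl)) hn

theorem X_mul_divX_apply (hC : IsCarlitzModule Fq Carl) (N : Fq[X]) :
    X * (Carl N).divX = Carl N := by
  simpa [hC.coeff_zero_apply] using X_mul_divX_add (Carl N)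

theorem isPrimitive_divX_apply (hC : IsCarlitzModule Fq Carl) (hM : M ≠ 0) :
    (Carl M).divX.IsPrimitive :=
  isPrimitive_of_dvd (isPrimitive_of_isUnit_leadingCoeff (hC.isUnit_leadingCoeff_apply hM))
    ⟨X, by rw [mul_comm, hC.X_mul_divX_apply]⟩

theorem isEisensteinAt_divX_apply (hC : IsCarlitzModule Fq Carl) (hM : Irreducible M) :
    (Carl M).divX.IsEisensteinAt (Ideal.span {M}) where
  leading := by
    rw [leadingCoeff, natDegree_divX_eq_natDegree_tsub_one, coeff_divX,
      Nat.sub_add_cancel (hC.one_lt_natDegree_apply hM).le, Ideal.mem_span_singleton]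
    exact fun h => hM.not_isUnit
      (isUnit_of_dvd_unit h (hC.isUnit_leadingCoeff_apply hM.ne_zero))
  mem {n} hn := by
    rw [natDegree_divX_eq_natDegree_tsub_one] at hn
    rw [coeff_divX, Ideal.mem_span_singleton]
    exact hC.dvd_coeff_apply hM (by lia)
  notMem := by
    rw [coeff_divX, zero_add, hC.coeff_one_apply, Ideal.span_singleton_pow,
      Ideal.mem_span_singleton, pow_two]
    exact fun h => hM.not_isUnit <| isUnit_of_dvd_one <|
      (mul_dvd_mul_iff_left hM.ne_zero).mp (by rwa [mul_one])

theorem irreducible_divX_apply (hC : IsCarlitzModule Fq Carl) (hM : Irreducible M) :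
    Irreducible (Carl M).divX := by
  refine (hC.isEisensteinAt_divX_apply hM).irreducible
    (PrincipalIdealRing.isMaximal_of_irreducible hM).isPrime
    (hC.isPrimitive_divX_apply hM.ne_zero) ?_
  rw [natDegree_divX_eq_natDegree_tsub_one]
  exact Nat.sub_pos_of_lt (hC.one_lt_natDegree_apply hM)

section GaloisCharacter

variable {F R : Type*} [CommRing F] [Algebra Fq[X] F] [CommRing R] [IsDomain R] [Algebra F R]
  [Algebra Fq[X] R] [IsScalarTower Fq[X] F R] {x : R}

theorem exists_aeval_apply_eq_algEquiv (hC : IsCarlitzModule Fq Carl) (hM : Irreducible M)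
    (hx : aeval x (Carl M) = 0) (hx0 : x ≠ 0) (σ : R ≃ₐ[F] R) :
    ∃ N, aeval x (Carl N) = σ x :=
  hC.exists_aeval_apply_eq hM hx hx0 (by rw [← algEquiv_aeval, hx, map_zero])

/-- The character of the group of automorphisms of `R` over `F` on the `M`-torsion of the Carlitz
module, valued in `Fq[X]/(M)`: `σ` is sent to the class of any `N` with `σ x = C_N(x)`, where `x` is
a fixed nonzero torsion point. -/
noncomputable def torsionCharacter (hC : IsCarlitzModule Fq Carl) (hM : Irreducible M)
    (hx : aeval x (Carl M) = 0) (hx0 : x ≠ 0) :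
    (R ≃ₐ[F] R) →* Fq[X] ⧸ Ideal.span {M} where
  toFun σ := Ideal.Quotient.mk _ (hC.exists_aeval_apply_eq_algEquiv hM hx hx0 σ).choose
  map_one' := by
    rw [← map_one (Ideal.Quotient.mk _), ← hC.aeval_apply_eq_iff hM hx hx0,
      (hC.exists_aeval_apply_eq_algEquiv hM hx hx0 1).choose_spec, hC.apply_one, aeval_X,
      AlgEquiv.one_apply]
  map_mul' σ τ := by
    have hspec (σ : R ≃ₐ[F] R) := (hC.exists_aeval_apply_eq_algEquiv hM hx hx0 σ).choose_spec
    rw [← map_mul, ← hC.aeval_apply_eq_iff hM hx hx0, hspec, AlgEquiv.mul_apply, mul_comm,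
      hC.aeval_apply_mul, hspec, ← algEquiv_aeval, hspec]

theorem torsionCharacter_eq_mk_iff (hC : IsCarlitzModule Fq Carl) (hM : Irreducible M)
    (hx : aeval x (Carl M) = 0) (hx0 : x ≠ 0) {σ : R ≃ₐ[F] R} {N : Fq[X]} :
    hC.torsionCharacter hM hx hx0 σ = Ideal.Quotient.mk (Ideal.span {M}) N ↔
      σ x = aeval x (Carl N) := by
  rw [← (hC.exists_aeval_apply_eq_algEquiv hM hx hx0 σ).choose_spec,
    hC.aeval_apply_eq_iff hM hx hx0]
  rfl

theorem torsionCharacter_eq_iff (hC : IsCarlitzModule Fq Carl) (hM : Irreducible M)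
    (hx : aeval x (Carl M) = 0) (hx0 : x ≠ 0) {σ τ : R ≃ₐ[F] R} :
    hC.torsionCharacter hM hx hx0 σ = hC.torsionCharacter hM hx hx0 τ ↔ σ x = τ x := by
  obtain ⟨N, hN⟩ := hC.exists_aeval_apply_eq_algEquiv hM hx hx0 τ
  rw [(hC.torsionCharacter_eq_mk_iff hM hx hx0).mpr hN.symm,
    hC.torsionCharacter_eq_mk_iff hM hx hx0, hN]

end GaloisCharacter

theorem separable_map_apply (hC : IsCarlitzModule Fq Carl) {F : Type*} [Field F] [Algebra Fq[X] F]
    (hMF : algebraMap Fq[X] F M ≠ 0) : ((Carl M).map (algebraMap Fq[X] F)).Separable := by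
  rw [separable_def, derivative_map, hC.derivative_apply, map_C]
  exact ⟨0, C (algebraMap Fq[X] F M)⁻¹, by
    rw [zero_mul, zero_add, ← C_mul, inv_mul_cancel₀ hMF, C_1]⟩

section SplittingField

variable {F K : Type*} [Field F] [Algebra Fq[X] F] [Field K] [Algebra F K]

theorem isGalois (hC : IsCarlitzModule Fq Carl) (hMF : algebraMap Fq[X] F M ≠ 0)
    [IsSplittingField F K ((Carl M).map (algebraMap Fq[X] F))] : IsGalois F K :=
  IsGalois.of_separable_splitting_field (hC.separable_map_apply hMF)

variable [Algebra Fq[X] K] [IsScalarTower Fq[X] F K] {x : K}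

theorem natDegree_minpoly [IsFractionRing Fq[X] F] (hC : IsCarlitzModule Fq Carl)
    (hM : Irreducible M) (hx : aeval x (Carl M) = 0) (hx0 : x ≠ 0) :
    (minpoly F x).natDegree = q ^ M.natDegree - 1 := by
  have hroot : aeval x ((Carl M).divX.map (algebraMap Fq[X] F)) = 0 := by
    rw [aeval_map_algebraMap]
    rw [← hC.X_mul_divX_apply, map_mul, aeval_X] at hx
    exact (mul_eq_zero.mp hx).resolve_left hx0
  have hirr : Irreducible ((Carl M).divX.map (algebraMap Fq[X] F)) :=
    (hC.isPrimitive_divX_apply hM.ne_zero).irreducible_iff_irreducible_map_fraction_map.mp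
      (hC.irreducible_divX_apply hM)
  rw [← minpoly.eq_of_irreducible hirr hroot, natDegree_mul_leadingCoeff_inv _ hirr.ne_zero,
    natDegree_map_eq_of_injective (IsFractionRing.injective Fq[X] F),
    natDegree_divX_eq_natDegree_tsub_one, hC.natDegree_apply hM.ne_zero]

variable [IsSplittingField F K ((Carl M).map (algebraMap Fq[X] F))]

variable (F) in
theorem adjoin_singleton_eq_top (hC : IsCarlitzModule Fq Carl) (hM : Irreducible M)
    (hx : aeval x (Carl M) = 0) (hx0 : x ≠ 0) : Algebra.adjoin F {x} = ⊤ := by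
  rw [eq_top_iff, ← IsSplittingField.adjoin_rootSet K ((Carl M).map (algebraMap Fq[X] F)),
    Algebra.adjoin_le_iff]
  intro y hy
  have hy : aeval y (Carl M) = 0 := by
    simpa only [aeval_map_algebraMap] using aeval_eq_zero_of_mem_rootSet hy
  obtain ⟨N, rfl⟩ := hC.exists_aeval_apply_eq hM hx hx0 hy
  rw [← aeval_map_algebraMap F]
  exact aeval_mem_adjoin_singleton F x

theorem injective_torsionCharacter (hC : IsCarlitzModule Fq Carl) (hM : Irreducible M)
    (hx : aeval x (Carl M) = 0) (hx0 : x ≠ 0) :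
    Function.Injective (hC.torsionCharacter (F := F) hM hx hx0) := by
  intro σ τ h
  have hστ : σ x = τ x := (hC.torsionCharacter_eq_iff hM hx hx0).mp h
  refine AlgEquiv.coe_toAlgHom_injective <|
    AlgHom.ext_of_adjoin_eq_top (hC.adjoin_singleton_eq_top F hM hx hx0) ?_
  rintro _ rfl
  exact hστ

variable [IsFractionRing Fq[X] F]

variable (F) in
theorem finrank_splittingField (hC : IsCarlitzModule Fq Carl) (hM : Irreducible M)
    (hx : aeval x (Carl M) = 0) (hx0 : x ≠ 0) :
    Module.finrank F K = q ^ M.natDegree - 1 := by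
  have : FiniteDimensional F K :=
    IsSplittingField.finiteDimensional K ((Carl M).map (algebraMap Fq[X] F))
  rw [← hC.natDegree_minpoly (F := F) hM hx hx0, eq_comm,
    ← Field.primitive_element_iff_minpoly_natDegree_eq]
  exact IntermediateField.adjoin_eq_top_of_algebra F _ (hC.adjoin_singleton_eq_top F hM hx hx0)

theorem bijective_toHomUnits_torsionCharacter (hC : IsCarlitzModule Fq Carl) (hM : Irreducible M)
    (hx : aeval x (Carl M) = 0) (hx0 : x ≠ 0) :
    Function.Bijective (hC.torsionCharacter (F := F) hM hx hx0).toHomUnits := by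
  have : IsGalois F K := hC.isGalois (by simpa using hM.ne_zero)
  have : FiniteDimensional F K :=
    IsSplittingField.finiteDimensional K ((Carl M).map (algebraMap Fq[X] F))
  have := finite_quotient_span_singleton hM.ne_zero
  have hinj : Function.Injective (hC.torsionCharacter (F := F) hM hx hx0).toHomUnits :=
    fun σ τ h => hC.injective_torsionCharacter hM hx hx0 (congrArg Units.val h)
  refine hinj.bijective_of_nat_card_le ?_
  rw [natCard_units_quotient_span_singleton hM, IsGalois.card_aut_eq_finrank,
    hC.finrank_splittingField F hM hx hx0, Nat.card_eq_fintype_card]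

variable (F) in
theorem exists_unitsQuotient_mulEquiv (hC : IsCarlitzModule Fq Carl) (hM : Irreducible M)
    (hx : aeval x (Carl M) = 0) (hx0 : x ≠ 0) :
    ∃ e : (Fq[X] ⧸ Ideal.span {M})ˣ ≃* (K ≃ₐ[F] K),
      ∀ (N : Fq[X]) (hN : IsUnit (Ideal.Quotient.mk (Ideal.span {M}) N)),
        e hN.unit x = aeval x (Carl N) := by
  let χ := MulEquiv.ofBijective _ (hC.bijective_toHomUnits_torsionCharacter (F := F) hM hx hx0)
  refine ⟨χ.symm, fun N hN => (hC.torsionCharacter_eq_mk_iff hM hx hx0).mp ?_⟩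
  exact congrArg Units.val (χ.apply_symm_apply hN.unit)

end SplittingField

end IsCarlitzModule

theorem stmt9_general {Fq F K : Type*} [Field Fq] [Fintype Fq] [Field F] [Algebra Fq[X] F]
    [IsFractionRing Fq[X] F] [Field K] [Algebra F K] [Algebra Fq[X] K] [IsScalarTower Fq[X] F K]
    {Carl : Fq[X] → Fq[X][X]} (hC : IsCarlitzModule Fq Carl) {M : Fq[X]} (hM : Irreducible M)
    [IsSplittingField F K ((Carl M).map (algebraMap Fq[X] F))] :
    IsGalois F K ∧
    Module.finrank F K = Fintype.card Fq ^ M.natDegree - 1 ∧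
    IsCyclic (Fq[X] ⧸ Ideal.span {M})ˣ ∧
    ∀ x : K, aeval x (Carl M) = 0 → x ≠ 0 →
      ∃ e : (Fq[X] ⧸ Ideal.span {M})ˣ ≃* (K ≃ₐ[F] K),
        ∀ (N : Fq[X]) (hN : IsUnit (Ideal.Quotient.mk (Ideal.span {M}) N)),
          e hN.unit x = aeval x (Carl N) := by
  have := PrincipalIdealRing.isMaximal_of_irreducible hM
  have := finite_quotient_span_singleton hM.ne_zero
  have hMF : algebraMap Fq[X] F M ≠ 0 := by simpa using hM.ne_zero
  have hMK : algebraMap Fq[X] K M ≠ 0 := by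
    rwa [IsScalarTower.algebraMap_apply Fq[X] F K, _root_.map_ne_zero]
  have hsplit : ((Carl M).map (algebraMap Fq[X] K)).Splits := by
    rw [IsScalarTower.algebraMap_eq Fq[X] F K, ← Polynomial.map_map]
    exact IsSplittingField.splits K _
  obtain ⟨x, hx, hx0⟩ := hC.exists_ne_zero_aeval_apply_eq_zero hM hMK hsplit
  exact ⟨hC.isGalois hMF, hC.finrank_splittingField F hM hx hx0, inferInstance,
    fun _ hx hx0 => hC.exists_unitsQuotient_mulEquiv F hM hx hx0⟩

/-- For `M ∈ F_q[T]` monic irreducible of degree `d`, the splitting field `K` over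
`F = F_q(T)` of the Carlitz polynomial `C_M(Z)` is Galois of degree `q^d - 1` with
Galois group isomorphic to the cyclic group `(F_q[T]/(M))ˣ`, where the automorphism
corresponding to `N mod M` sends a fixed nonzero root `λ` of `C_M` to `C_N(λ)`. -/
theorem stmt9 (Fq : Type) [Field Fq] [Fintype Fq]
    (Carl : Polynomial Fq → Polynomial (Polynomial Fq))
    (h1 : Carl 1 = X)
    (hT : Carl X = X ^ (Fintype.card Fq) + C X * X)
    (hadd : ∀ M N : Polynomial Fq, Carl (M + N) = Carl M + Carl N)
    (hsmul : ∀ (a : Fq) (M : Polynomial Fq), Carl (C a * M) = C (C a) * Carl M)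
    (hmul : ∀ M N : Polynomial Fq, Carl (M * N) = (Carl M).comp (Carl N))
    (M : Polynomial Fq) (hmonic : M.Monic) (hirr : Irreducible M)
    (d : ℕ) (hd : M.natDegree = d)
    (p : Polynomial (RatFunc Fq))
    (hp : p = (Carl M).map (algebraMap (Polynomial Fq) (RatFunc Fq))) :
    IsGalois (RatFunc Fq) p.SplittingField ∧
    Module.finrank (RatFunc Fq) p.SplittingField = Fintype.card Fq ^ d - 1 ∧
    IsCyclic (Polynomial Fq ⧸ Ideal.span {M})ˣ ∧
    (∀ lam : p.SplittingField, Polynomial.aeval lam p = 0 → lam ≠ 0 →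
      ∃ e : (Polynomial Fq ⧸ Ideal.span {M})ˣ ≃*
          (p.SplittingField ≃ₐ[RatFunc Fq] p.SplittingField),
        ∀ (N : Polynomial Fq) (hN : IsUnit (Ideal.Quotient.mk (Ideal.span {M}) N)),
          (e hN.unit) lam =
            Polynomial.aeval lam
              ((Carl N).map (algebraMap (Polynomial Fq) (RatFunc Fq)))) := by
  subst hp hd
  simpa only [aeval_map_algebraMap] using stmt9_general (F := RatFunc Fq)
    (K := ((Carl M).map (algebraMap Fq[X] (RatFunc Fq))).SplittingField)
    ⟨h1, hT, hadd, hsmul, hmul⟩ hirr
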